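/- (Weak Nullstellensatz.) For every finite subset X of L × B, the following are equivalent: (1) X ⊢ ∅; (2) there exists an atom e of B such that ⋀_{a ≥ e} ⋀ X_a ≤ ⋁_{a ≥ e} ⋁ X_{-a} holds in L. -/

import Mathlib

/-- An entailment relation on a set `S`: a relation between finite subsets of `S`
satisfying reflexivity (R), monotonicity (M) and transitivity/cut (T). -/
def IsEntailment {S : Type*} [DecidableEq S] (E : Finset S → Finset S → Prop) : Prop :=
  (∀ X Y : Finset S, (∃ x, x ∈ X ∧ x ∈ Y) → E X Y) ∧
  (∀ X X' Y Y' : Finset S, E X Y → E (X ∪ X') (Y ∪ Y')) ∧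
  (∀ X Y : Finset S, ∀ z : S, E X (insert z Y) → E (insert z X) Y → E X Y)

variable (M : Type*) (D : Type*) [Lattice M] [BoundedOrder M] [Lattice D] [BoundedOrder D]
  [Fintype D] [DecidableEq M] [DecidableEq D]

/-- The generating axioms (s), (∧), (∨), (0), (1), (t) for the entailment relation
of `D`-valued lattice maps on `M`. -/
def LatticeAxioms : Finset (M × D) → Finset (M × D) → Prop := fun X Y =>
  (∃ x a b, a ≠ b ∧ X = {(x, a), (x, b)} ∧ Y = ∅) ∨
  (∃ x y a b, X = {(x, a), (y, b)} ∧ Y = {(x ⊓ y, a ⊓ b)}) ∨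
  (∃ x y a b, X = {(x, a), (y, b)} ∧ Y = {(x ⊔ y, a ⊔ b)}) ∨
  (X = ∅ ∧ Y = {((⊥ : M), (⊥ : D))}) ∨
  (X = ∅ ∧ Y = {((⊤ : M), (⊤ : D))}) ∨
  (∃ x : M, X = ∅ ∧ Y = Finset.univ.image (fun a : D => (x, a)))

/-- The least entailment relation on `M × D` containing all the generating axioms:
the entailment relation of `D`-valued lattice maps on `M`. -/
def LatticeEntails (X Y : Finset (M × D)) : Prop :=
  ∀ E : Finset (M × D) → Finset (M × D) → Prop,
    IsEntailment E → (∀ X' Y', LatticeAxioms M D X' Y' → E X' Y') → E X Y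

/-- `⋀_{a ≥ e} ⋀ X_a`: the meet in `L` over all `x` with `(x, a) ∈ X` for some `a ≥ e`;
the empty meet is `⊤`. -/
def atomMeet {L B : Type*} [Lattice L] [OrderTop L] [BooleanAlgebra B] [DecidableRel ((· ≤ ·) : B → B → Prop)]
    (e : B) (X : Finset (L × B)) : L :=
  (X.filter fun p => e ≤ p.2).inf Prod.fst

/-- `⋁_{a ≥ e} ⋁ X_{-a}`: the join in `L` over all `x` with `(x, aᶜ) ∈ X` for some `a ≥ e`;
the empty join is `⊥`. -/
def atomJoin {L B : Type*} [Lattice L] [OrderBot L] [BooleanAlgebra B] [DecidableRel ((· ≤ ·) : B → B → Prop)]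
    (e : B) (X : Finset (L × B)) : L :=
  (X.filter fun p => e ≤ p.2ᶜ).sup Prod.fst

/-!
(2) ⇒ (1): `X` entails the pair formed by the meet of all `(x, a) ∈ X` with `e ≤ a`, and the pair
formed by the join of all `(y, b) ∈ X` with `e ≤ bᶜ`. A lattice map sending the first components to
the second ones would be monotone, yet `e` lies below the former value and not below the latter;
axioms (∧) and (s) turn this into a contradiction.

(1) ⇒ (2): if the inequality fails at every atom `e`, the prime ideal theorem separates its two
sides by a lattice map `L → Prop`. Since `B` is the powerset of its atoms, these maps
combine into a lattice map `L → B` whose graph contains `X`; graphs of lattice maps are models of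
the axioms, so `X ⊢ ∅` is impossible.
-/

namespace IsEntailment

variable {S : Type*} [DecidableEq S] {E : Finset S → Finset S → Prop} {X X' Y Y' : Finset S}
  {p q : S}

theorem mono (hE : IsEntailment E) (hX : X ⊆ X') (hY : Y ⊆ Y') (h : E X Y) : E X' Y' := by
  simpa only [Finset.union_eq_right.mpr hX, Finset.union_eq_right.mpr hY]
    using hE.2.1 X X' Y Y' h

theorem singleton_of_mem (hE : IsEntailment E) (hp : p ∈ X) : E X {p} :=
  hE.1 X {p} ⟨p, hp, Finset.mem_singleton_self p⟩

theorem cut_pair (hE : IsEntailment E) (hp : E X {p}) (hq : E X {q}) (h : E {p, q} Y) :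
    E X Y := by
  have hpq : E (insert q (insert p X)) Y :=
    hE.mono (by grind) Finset.Subset.rfl h
  have hp' : E (insert p X) Y :=
    hE.2.2 _ _ q (hE.mono (Finset.subset_insert p X) (by simp) hq) hpq
  exact hE.2.2 _ _ p (hE.mono Finset.Subset.rfl (by simp) hp) hp'

theorem subset_imp_exists_mem (T : Set S) :
    IsEntailment fun X Y : Finset S => (X : Set S) ⊆ T → ∃ y ∈ Y, y ∈ T := by
  refine ⟨fun X Y ⟨x, hxX, hxY⟩ hXT => ⟨x, hxY, hXT hxX⟩, fun X X' Y Y' h hXT => ?_,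
    fun X Y z hY hz hXT => ?_⟩
  · obtain ⟨y, hy, hyT⟩ := h fun x hx => hXT (Finset.mem_union_left X' hx)
    exact ⟨y, Finset.mem_union_left Y' hy, hyT⟩
  · obtain ⟨y, hy, hyT⟩ := hY hXT
    rcases Finset.mem_insert.mp hy with rfl | hyY
    · exact hz (by simpa using Set.insert_subset hyT hXT)
    · exact ⟨y, hyY, hyT⟩

end IsEntailment

namespace LatticeEntails

variable {M D} {X Y : Finset (M × D)}

theorem isEntailment : IsEntailment (LatticeEntails M D) :=
  ⟨fun X Y h _ hE _ => hE.1 X Y h,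
    fun X X' Y Y' h E hE hax => hE.2.1 X X' Y Y' (h E hE hax),
    fun X Y z h h' E hE hax => hE.2.2 X Y z (h E hE hax) (h' E hE hax)⟩

theorem of_latticeAxioms (h : LatticeAxioms M D X Y) : LatticeEntails M D X Y :=
  fun _ _ hax => hax X Y h

theorem pair_inf (p q : M × D) : LatticeEntails M D {p, q} {p ⊓ q} :=
  of_latticeAxioms (.inr (.inl ⟨p.1, q.1, p.2, q.2, rfl, rfl⟩))

theorem pair_sup (p q : M × D) : LatticeEntails M D {p, q} {p ⊔ q} :=
  of_latticeAxioms (.inr (.inr (.inl ⟨p.1, q.1, p.2, q.2, rfl, rfl⟩)))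

theorem finset_inf (X : Finset (M × D)) :
    LatticeEntails M D X {(X.inf Prod.fst, X.inf Prod.snd)} := by
  induction X using Finset.induction_on with
  | empty => exact of_latticeAxioms (.inr (.inr (.inr (.inr (.inl ⟨rfl, rfl⟩)))))
  | insert p X _ ih =>
    simp only [Finset.inf_insert]
    exact isEntailment.cut_pair (isEntailment.singleton_of_mem (by simp))
      (isEntailment.mono (Finset.subset_insert p X) Finset.Subset.rfl ih) (pair_inf p _)

theorem finset_sup (X : Finset (M × D)) :
    LatticeEntails M D X {(X.sup Prod.fst, X.sup Prod.snd)} := by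
  induction X using Finset.induction_on with
  | empty => exact of_latticeAxioms (.inr (.inr (.inr (.inl ⟨rfl, rfl⟩))))
  | insert p X _ ih =>
    simp only [Finset.sup_insert]
    exact isEntailment.cut_pair (isEntailment.singleton_of_mem (by simp))
      (isEntailment.mono (Finset.subset_insert p X) Finset.Subset.rfl ih) (pair_sup p _)

theorem pair_empty_of_le_of_not_le {p q : M × D} (hfst : p.1 ≤ q.1) (hsnd : ¬p.2 ≤ q.2) :
    LatticeEntails M D {p, q} ∅ := by
  have hinf : p ⊓ q = (p.1, p.2 ⊓ q.2) := Prod.ext (inf_eq_left.mpr hfst) rfl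
  have hne : p.2 ≠ p.2 ⊓ q.2 := fun h => hsnd (inf_eq_left.mp h.symm)
  have hs : LatticeEntails M D {p, p ⊓ q} ∅ :=
    of_latticeAxioms (.inl ⟨p.1, p.2, p.2 ⊓ q.2, hne, by rw [hinf], rfl⟩)
  exact isEntailment.cut_pair (isEntailment.singleton_of_mem (by simp)) (pair_inf p q) hs

theorem exists_mem_apply_eq (h : LatticeEntails M D X Y) (φ : BoundedLatticeHom M D)
    (hφ : ∀ p ∈ X, φ p.1 = p.2) : ∃ p ∈ Y, φ p.1 = p.2 := by
  refine h _ (IsEntailment.subset_imp_exists_mem {p : M × D | φ p.1 = p.2}) ?_ hφ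
  rintro _ _ (⟨x, a, b, hab, rfl, rfl⟩ | ⟨x, y, a, b, rfl, rfl⟩ | ⟨x, y, a, b, rfl, rfl⟩ |
    ⟨rfl, rfl⟩ | ⟨rfl, rfl⟩ | ⟨x, rfl, rfl⟩) hgraph
  · have ha : φ x = a := hgraph (a := (x, a)) (by simp)
    have hb : φ x = b := hgraph (a := (x, b)) (by simp)
    exact absurd (ha.symm.trans hb) hab
  · have hx : φ x = a := hgraph (a := (x, a)) (by simp)
    have hy : φ y = b := hgraph (a := (y, b)) (by simp)
    exact ⟨_, Finset.mem_singleton_self _, by simp [hx, hy]⟩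
  · have hx : φ x = a := hgraph (a := (x, a)) (by simp)
    have hy : φ y = b := hgraph (a := (y, b)) (by simp)
    exact ⟨_, Finset.mem_singleton_self _, by simp [hx, hy]⟩
  · exact ⟨_, Finset.mem_singleton_self _, map_bot φ⟩
  · exact ⟨_, Finset.mem_singleton_self _, map_top φ⟩
  · exact ⟨(x, φ x), by simp, rfl⟩

end LatticeEntails

theorem supPrime_of_isAtom {α : Type*} [DistribLattice α] [OrderBot α] {e : α} (he : IsAtom e) :
    SupPrime e := by
  refine ⟨fun hmin => he.ne_bot hmin.eq_bot, fun a b hab => ?_⟩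
  by_contra! h
  have hdisj : Disjoint e (a ⊔ b) :=
    (he.not_le_iff_disjoint.mp h.1).sup_right (he.not_le_iff_disjoint.mp h.2)
  exact he.not_le_iff_disjoint.mpr hdisj hab

theorem le_compl_iff_not_le_of_isAtom {B : Type*} [BooleanAlgebra B] {e a : B} (he : IsAtom e) :
    e ≤ aᶜ ↔ ¬e ≤ a :=
  le_compl_iff_disjoint_right.trans he.not_le_iff_disjoint.symm

/-- The bounded lattice homomorphism to `Prop` whose kernel is the prime ideal `J`, that is, the
characteristic function of the complementary prime filter. -/
def primeIdealHom {L : Type*} [Lattice L] [BoundedOrder L] (J : Order.Ideal L) (hJ : J.IsPrime) :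
    BoundedLatticeHom L Prop where
  toFun x := x ∉ J
  map_sup' x y := by
    simp only [Order.Ideal.sup_mem_iff, not_and_or, sup_Prop_eq]
  map_inf' x y := by
    have hinf : x ⊓ y ∈ J ↔ x ∈ J ∨ y ∈ J :=
      ⟨hJ.mem_or_mem, fun h => h.elim (J.lower inf_le_left) (J.lower inf_le_right)⟩
    simp only [hinf, not_or, inf_Prop_eq]
  map_top' := eq_true hJ.toIsProper.top_notMem
  map_bot' := eq_false (not_not_intro J.bot_mem)

theorem exists_boundedLatticeHom_prop_of_not_le {L : Type*} [DistribLattice L] [BoundedOrder L]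
    {a b : L} (hab : ¬a ≤ b) : ∃ f : BoundedLatticeHom L Prop, f a ∧ ¬f b := by
  have hdisj : Disjoint (Order.PFilter.principal a : Set L) (Order.Ideal.principal b) :=
    Set.disjoint_left.mpr fun x hax hxb =>
      hab ((Order.PFilter.mem_principal.mp hax).trans (Order.Ideal.mem_principal.mp hxb))
  obtain ⟨J, hJ, hbJ, haJ⟩ := DistribLattice.prime_ideal_of_disjoint_filter_ideal hdisj
  refine ⟨primeIdealHom J hJ, ?_, not_not_intro ?_⟩
  · exact Set.disjoint_left.mp haJ (Order.PFilter.mem_principal.mpr le_rfl)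
  · exact hbJ (Order.Ideal.mem_principal.mpr le_rfl)

theorem exists_boundedLatticeHom_atom_le_iff {L B : Type*} [Lattice L] [BoundedOrder L]
    [CompleteAtomicBooleanAlgebra B] (f : {e : B // IsAtom e} → BoundedLatticeHom L Prop) :
    ∃ φ : BoundedLatticeHom L B, ∀ e x, e.1 ≤ φ x ↔ f e x := by
  let atoms : B ≃o Set {e : B // IsAtom e} := CompleteAtomicBooleanAlgebra.toSetOfIsAtom
  let g : BoundedLatticeHom L (Set {e : B // IsAtom e}) :=
    { toFun := fun x => {e | f e x}
      map_sup' := fun x y => Set.ext fun e => by simp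
      map_inf' := fun x y => Set.ext fun e => by simp
      map_top' := Set.ext fun e => by simp
      map_bot' := Set.ext fun e => by simp }
  refine ⟨(atoms.symm : BoundedLatticeHom _ B).comp g, fun e x => ?_⟩
  change e ∈ atoms (atoms.symm (g x)) ↔ e ∈ g x
  rw [atoms.apply_symm_apply]

section Nullstellensatz

variable {L B : Type*} [BooleanAlgebra B] [DecidableRel ((· ≤ ·) : B → B → Prop)]
  {X : Finset (L × B)}

theorem latticeEntails_empty_of_atomMeet_le_atomJoin [Lattice L] [BoundedOrder L] [Fintype B]
    [DecidableEq L] [DecidableEq B] {e : B} (he : IsAtom e) (h : atomMeet e X ≤ atomJoin e X) :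
    LatticeEntails L B X ∅ := by
  let P := X.filter fun p => e ≤ p.2
  let Q := X.filter fun p => e ≤ p.2ᶜ
  have hP : LatticeEntails L B X {(atomMeet e X, P.inf Prod.snd)} :=
    LatticeEntails.isEntailment.mono (X.filter_subset _) Finset.Subset.rfl
      (LatticeEntails.finset_inf P)
  have hQ : LatticeEntails L B X {(atomJoin e X, Q.sup Prod.snd)} :=
    LatticeEntails.isEntailment.mono (X.filter_subset _) Finset.Subset.rfl
      (LatticeEntails.finset_sup Q)
  have he_inf : e ≤ P.inf Prod.snd := Finset.le_inf fun p hp => (Finset.mem_filter.mp hp).2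
  have he_sup : ¬e ≤ Q.sup Prod.snd := by
    rw [(supPrime_of_isAtom he).le_finset_sup]
    rintro ⟨q, hq, heq⟩
    exact (le_compl_iff_not_le_of_isAtom he).mp (Finset.mem_filter.mp hq).2 heq
  exact LatticeEntails.isEntailment.cut_pair hP hQ
    (LatticeEntails.pair_empty_of_le_of_not_le h fun hle => he_sup (he_inf.trans hle))

theorem exists_boundedLatticeHom_apply_eq [DistribLattice L] [BoundedOrder L] [Finite B]
    (h : ∀ e : B, IsAtom e → ¬atomMeet e X ≤ atomJoin e X) :
    ∃ φ : BoundedLatticeHom L B, ∀ p ∈ X, φ p.1 = p.2 := by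
  choose f hf_meet hf_join using fun e : {e : B // IsAtom e} =>
    exists_boundedLatticeHom_prop_of_not_le (h e.1 e.2)
  have := Fintype.ofFinite B
  let _ := Fintype.toCompleteAtomicBooleanAlgebra B
  obtain ⟨φ, hφ⟩ := exists_boundedLatticeHom_atom_le_iff f
  refine ⟨φ, fun p hp => eq_iff_atom_le_iff.mpr fun e he => (hφ ⟨e, he⟩ p.1).trans ⟨?_, ?_⟩⟩
  · intro hfp
    by_contra hep
    have hp_le : p.1 ≤ atomJoin e X := Finset.le_sup (f := Prod.fst)
      (Finset.mem_filter.mpr ⟨hp, (le_compl_iff_not_le_of_isAtom he).mpr hep⟩)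
    exact hf_join ⟨e, he⟩ (OrderHomClass.mono (f ⟨e, he⟩) hp_le hfp)
  · intro hep
    have hle_p : atomMeet e X ≤ p.1 := Finset.inf_le (Finset.mem_filter.mpr ⟨hp, hep⟩)
    exact OrderHomClass.mono (f ⟨e, he⟩) hle_p (hf_meet ⟨e, he⟩)

end Nullstellensatz

theorem stmt7 {L B : Type*} [DistribLattice L] [BoundedOrder L] [BooleanAlgebra B]
    [Fintype B] [DecidableEq L] [DecidableEq B] [DecidableRel ((· ≤ ·) : B → B → Prop)]
    (X : Finset (L × B)) :
    LatticeEntails L B X ∅ ↔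
      ∃ e : B, IsAtom e ∧ atomMeet e X ≤ atomJoin e X := by
  refine ⟨fun hX => ?_, fun ⟨_, he, hle⟩ => latticeEntails_empty_of_atomMeet_le_atomJoin he hle⟩
  by_contra! hnle
  obtain ⟨φ, hφ⟩ := exists_boundedLatticeHom_apply_eq hnle
  obtain ⟨p, hp, -⟩ := hX.exists_mem_apply_eq φ hφ
  exact Finset.notMem_empty p hp
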